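/- arXiv:1905.04441 — 7 statements merged into one kernel-verified Lean document; each statement's English description precedes it below -/
import Mathlib

section
/- The composition of the sampling matrix with the synthesis matrix is diagonal: S^* A = (D diag(s) U^*)(U diag(a) D^T) equals the K×K diagonal matrix with i-th diagonal entry R̃_{sa}(i) = Σ_{ℓ=0}^{M−1} s(i+Kℓ) a(i+Kℓ). -/
open Matrix BigOperators

noncomputable section

/-- Downsampling matrix `D ∈ ℂ^{K×N}` with `N = M·K`: `D i j = 1` iff `j ≡ i (mod K)`. -/
def Dmat (K M : ℕ) : Matrix (Fin K) (Fin (M * K)) ℂ :=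
  Matrix.of fun i j => if (j : ℕ) % K = (i : ℕ) then 1 else 0

/-- The index `i + K·ℓ` viewed in `Fin (M·K)`. -/
def fold (K M : ℕ) (i : Fin K) (ℓ : Fin M) : Fin (M * K) :=
  ⟨(i : ℕ) + K * (ℓ : ℕ), by
    have hi := i.isLt
    calc (i : ℕ) + K * (ℓ : ℕ) < K + K * (ℓ : ℕ) := by omega
      _ = K * ((ℓ : ℕ) + 1) := by ring
      _ ≤ K * M := Nat.mul_le_mul_left K ℓ.isLt
      _ = M * K := Nat.mul_comm K M⟩

/-- Sampled cross-correlation `R̃_{fg}(i) = ∑_{ℓ<M} f(i+Kℓ) g(i+Kℓ)`. -/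
def Rtil (K M : ℕ) (f g : Fin (M * K) → ℝ) (i : Fin K) : ℝ :=
  ∑ ℓ : Fin M, f (fold K M i ℓ) * g (fold K M i ℓ)

/-- Sampling matrix `S^* = D diag(s) U^*`. -/
def SamplingMat (K M : ℕ) (U : Matrix (Fin (M * K)) (Fin (M * K)) ℂ)
    (s : Fin (M * K) → ℝ) : Matrix (Fin K) (Fin (M * K)) ℂ :=
  Dmat K M * Matrix.diagonal (fun j => (s j : ℂ)) * Uᴴ

/-- Synthesis matrix `A = U diag(a) Dᵀ`. -/
def SynthesisMat (K M : ℕ) (U : Matrix (Fin (M * K)) (Fin (M * K)) ℂ)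
    (a : Fin (M * K) → ℝ) : Matrix (Fin (M * K)) (Fin K) ℂ :=
  U * Matrix.diagonal (fun j => (a j : ℂ)) * (Dmat K M)ᵀ

/-- The composition of the sampling matrix with the synthesis matrix is diagonal,
with diagonal entries the sampled cross-correlation `R̃_{sa}`. -/
theorem sampling_mul_synthesis_eq_diagonal (K M : ℕ) (hK : 0 < K) (hM : 0 < M)
    (U : Matrix (Fin (M * K)) (Fin (M * K)) ℂ)
    (hU : U ∈ Matrix.unitaryGroup (Fin (M * K)) ℂ)
    (s a : Fin (M * K) → ℝ) :
    SamplingMat K M U s * SynthesisMat K M U a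
      = Matrix.diagonal (fun i : Fin K => (Rtil K M s a i : ℂ)) := by
  have h1 : SamplingMat K M U s * SynthesisMat K M U a
      = (Dmat K M * Matrix.diagonal (fun j => (s j : ℂ))) *
        (Matrix.diagonal (fun j => (a j : ℂ)) * (Dmat K M)ᵀ) := by
    have hU' : Uᴴ * U = 1 := Matrix.mem_unitaryGroup_iff'.mp hU
    unfold SamplingMat SynthesisMat
    rw [Matrix.mul_assoc U, Matrix.mul_assoc _ Uᴴ, ← Matrix.mul_assoc Uᴴ, hU', Matrix.one_mul]
  rw [h1]
  ext i k
  rw [Matrix.mul_apply]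
  simp only [Matrix.mul_diagonal, Matrix.diagonal_mul, Matrix.transpose_apply, Dmat, Matrix.of_apply]
  by_cases hik : i = k
  · subst hik
    rw [Matrix.diagonal_apply_eq]
    unfold Rtil
    push_cast
    symm
    apply Finset.sum_of_injOn (fold K M i)
    · intro x _ y _ hxy
      have h := congrArg Fin.val hxy
      simp only [fold] at h
      have h2 : K * (x : ℕ) = K * (y : ℕ) := by omega
      exact Fin.ext (Nat.eq_of_mul_eq_mul_left hK h2)
    · intro x _
      simp
    · intro j _ hj
      have hne : ¬ ((j : ℕ) % K = (i : ℕ)) := by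
        intro hm
        apply hj
        refine ⟨⟨(j : ℕ) / K, (Nat.div_lt_iff_lt_mul hK).mpr j.isLt⟩, by simp, ?_⟩
        apply Fin.ext
        simp only [fold]
        rw [← hm]
        exact Nat.mod_add_div _ _
      simp [hne]
    · intro l _
      have : ((fold K M i l : Fin (M * K)) : ℕ) % K = (i : ℕ) := by
        simp only [fold]
        rw [Nat.add_mul_mod_self_left, Nat.mod_eq_of_lt i.isLt]
      simp [this]
  · rw [Matrix.diagonal_apply_ne _ hik]
    apply Finset.sum_eq_zero
    intro j _
    by_cases h : (j : ℕ) % K = (i : ℕ)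
    · have : ¬ ((j : ℕ) % K = (k : ℕ)) := fun h' => hik (Fin.ext (h.symm.trans h'))
      simp [this]
    · simp [h]
end
end

section
/- Perfect recovery with a subspace prior (unconstrained, direct-sum case): assume R̃_{sa}(i) ≠ 0 for every i ∈ {0,…,K−1}, and let H ∈ ℂ^{K×K} be the diagonal correction filter with i-th diagonal entry 1/R̃_{sa}(i). Then for every signal x in the PGS subspace generated by a (i.e., x = A d for some d ∈ ℂ^K), the reconstruction A H S^* x equals x. -/
open Matrix BigOperators

noncomputable section

theorem key_DD (K M : ℕ) (hK : 0 < K) (s a : Fin (M * K) → ℝ) :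
    Dmat K M * Matrix.diagonal (fun j => (s j : ℂ)) *
      (Matrix.diagonal (fun j => (a j : ℂ)) * (Dmat K M)ᵀ) =
    Matrix.diagonal (fun i : Fin K => (Rtil K M s a i : ℂ)) := by
  ext i k
  rw [Matrix.mul_apply]
  simp only [Matrix.mul_diagonal, Matrix.diagonal_mul, Matrix.transpose_apply, Dmat, Matrix.of_apply]
  rw [Matrix.diagonal_apply]
  by_cases hik : i = k
  · subst hik
    simp only [if_true, Rtil]
    push_cast
    symm
    apply Finset.sum_of_injOn (fold K M i)
    · intro x _ y _ h
      simp only [fold, Fin.mk.injEq] at h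
      apply Fin.ext
      exact Nat.eq_of_mul_eq_mul_left hK (by omega)
    · intro x _
      simp
    · intro j _ hj
      rw [if_neg]
      · simp
      · intro h
        apply hj
        refine ⟨⟨(j : ℕ) / K, Nat.div_lt_of_lt_mul (lt_of_lt_of_eq j.isLt (Nat.mul_comm M K))⟩, by simp, ?_⟩
        apply Fin.ext
        simp only [fold]
        rw [← h]
        exact Nat.mod_add_div _ _
    · intro l _
      have : ((fold K M i l : Fin (M * K)) : ℕ) % K = (i : ℕ) := by
        simp [fold, Nat.mod_eq_of_lt i.isLt]
      simp [this]
  · rw [if_neg hik]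
    apply Finset.sum_eq_zero
    intro j _
    by_cases h : (j : ℕ) % K = (i : ℕ)
    · have : ¬ (j : ℕ) % K = (k : ℕ) := fun h' => hik (Fin.ext (h.symm.trans h'))
      simp [this]
    · simp [h]

/-- Perfect recovery with a subspace prior (unconstrained, direct-sum case):
if `R̃_{sa}(i) ≠ 0` for all `i`, the diagonal correction filter `H = diag(1/R̃_{sa})`
gives `A H S^* x = x` for every `x` in the PGS subspace generated by `a`. -/
theorem subspace_prior_perfect_recovery (K M : ℕ) (hK : 0 < K) (hM : 0 < M)
    (U : Matrix (Fin (M * K)) (Fin (M * K)) ℂ)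
    (hU : U ∈ Matrix.unitaryGroup (Fin (M * K)) ℂ)
    (s a : Fin (M * K) → ℝ)
    (hR : ∀ i : Fin K, Rtil K M s a i ≠ 0) :
    ∀ x : Fin (M * K) → ℂ,
      (∃ d : Fin K → ℂ, x = (SynthesisMat K M U a).mulVec d) →
      (SynthesisMat K M U a).mulVec
        ((Matrix.diagonal (fun i : Fin K => ((Rtil K M s a i : ℂ))⁻¹)).mulVec
          ((SamplingMat K M U s).mulVec x)) = x := by
  rintro x ⟨d, rfl⟩
  have hU' : Uᴴ * U = 1 := Matrix.mem_unitaryGroup_iff'.mp hU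
  have h1 : SamplingMat K M U s * SynthesisMat K M U a =
      Matrix.diagonal (fun i : Fin K => (Rtil K M s a i : ℂ)) := by
    rw [← key_DD K M hK s a]
    simp only [SamplingMat, SynthesisMat, Matrix.mul_assoc]
    rw [← Matrix.mul_assoc Uᴴ U, hU', Matrix.one_mul]
  rw [Matrix.mulVec_mulVec d (SamplingMat K M U s), h1,
    Matrix.mulVec_mulVec d, Matrix.diagonal_mul_diagonal]
  have h2 : (fun i : Fin K => ((Rtil K M s a i : ℂ))⁻¹ * (Rtil K M s a i : ℂ)) = fun _ => 1 := by
    funext i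
    exact inv_mul_cancel₀ (by exact_mod_cast hR i)
  rw [h2, Matrix.diagonal_one, Matrix.one_mulVec]
end
end

section
/- Direct-sum condition is equivalent to invertibility of the sampled Gram matrix: let A, S ∈ ℂ^{N×K} be matrices whose associated linear maps ℂ^K → ℂ^N are injective. Then ℂ^N is the (internal) direct sum of the column space of A and the orthogonal complement of the column space of S (i.e., these two subspaces intersect trivially and together span ℂ^N) if and only if the K×K matrix S^* A is invertible, where S^* is the conjugate transpose of S and ℂ^N carries the standard Hermitian inner product. -/
open Matrix BigOperators

noncomputable section

/-- The direct-sum condition `ℂ^N = range(A) ⊕ (range S)ᗮ` is equivalent to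
invertibility of the sampled Gram matrix `S^* A`. -/
theorem directSum_iff_isUnit_gram (N K : ℕ) (A S : Matrix (Fin N) (Fin K) ℂ)
    (hA : Function.Injective (Matrix.toEuclideanLin A))
    (hS : Function.Injective (Matrix.toEuclideanLin S)) :
    ((LinearMap.range (Matrix.toEuclideanLin A)
        ⊓ (LinearMap.range (Matrix.toEuclideanLin S))ᗮ = ⊥)
      ∧ (LinearMap.range (Matrix.toEuclideanLin A)
        ⊔ (LinearMap.range (Matrix.toEuclideanLin S))ᗮ = ⊤))
    ↔ IsUnit (Sᴴ * A) := by
  have key : (LinearMap.range (Matrix.toEuclideanLin S))ᗮ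
      = LinearMap.ker (Matrix.toEuclideanLin Sᴴ) := by
    rw [Matrix.toEuclideanLin_conjTranspose_eq_adjoint, LinearMap.orthogonal_range]
  rw [key]
  have hmul : ∀ x, Matrix.toEuclideanLin Sᴴ (Matrix.toEuclideanLin A x)
      = Matrix.toEuclideanLin (Sᴴ * A) x := by
    intro x
    simp [Matrix.toLpLin_apply, Matrix.mulVec_mulVec]
  constructor
  · rintro ⟨h, -⟩
    rw [← Matrix.mulVec_injective_iff_isUnit]
    intro v w hvw
    have h1 : Matrix.toEuclideanLin A (WithLp.toLp 2 (v - w)) ∈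
        LinearMap.range (Matrix.toEuclideanLin A) ⊓ LinearMap.ker (Matrix.toEuclideanLin Sᴴ) := by
      refine ⟨⟨_, rfl⟩, ?_⟩
      change Matrix.toEuclideanLin Sᴴ _ = 0
      rw [hmul, Matrix.toLpLin_apply]
      have : (Sᴴ * A) *ᵥ (v - w) = 0 := by
        rw [Matrix.mulVec_sub]; exact sub_eq_zero.mpr hvw
      simp [this]
    rw [h, Submodule.mem_bot] at h1
    have h2 := hA (h1.trans (map_zero _).symm)
    have h3 : v - w = 0 := congrArg WithLp.ofLp h2
    exact sub_eq_zero.mp h3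
  · intro hu
    obtain ⟨B, hB⟩ := hu.exists_right_inv
    have hinj := Matrix.mulVec_injective_iff_isUnit.mpr hu
    constructor
    · rw [eq_bot_iff]
      rintro _ ⟨⟨x, rfl⟩, hx⟩
      change Matrix.toEuclideanLin Sᴴ _ = 0 at hx
      rw [hmul, Matrix.toLpLin_apply] at hx
      have h3 : (Sᴴ * A) *ᵥ x.ofLp = 0 := congrArg WithLp.ofLp hx
      have h4 : x.ofLp = 0 := hinj (h3.trans (Matrix.mulVec_zero _).symm)
      have h5 : x = 0 := WithLp.ofLp_injective 2 h4
      simp [h5]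
    · rw [eq_top_iff]
      intro y _
      rw [Submodule.mem_sup]
      refine ⟨Matrix.toEuclideanLin A (Matrix.toEuclideanLin B (Matrix.toEuclideanLin Sᴴ y)),
        ⟨_, rfl⟩, y - Matrix.toEuclideanLin A
          (Matrix.toEuclideanLin B (Matrix.toEuclideanLin Sᴴ y)), ?_, by abel⟩
      rw [LinearMap.mem_ker, map_sub, hmul, sub_eq_zero]
      have h6 : ∀ z, Matrix.toEuclideanLin (Sᴴ * A) (Matrix.toEuclideanLin B z) = z := by
        intro z
        rw [Matrix.mul_assoc] at hB
        simp [Matrix.toLpLin_apply, Matrix.mulVec_mulVec, Matrix.mul_assoc, hB]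
      rw [h6]
end
end

section
/- Least-squares recovery with a subspace prior (unconstrained, non-direct-sum case): assume R̃_{aa}(i) ≠ 0 for every i ∈ {0,…,K−1}, and let H ∈ ℂ^{K×K} be the diagonal matrix with i-th diagonal entry 1/R̃_{sa}(i) if R̃_{sa}(i) ≠ 0 and 0 otherwise. Then for every x in the PGS subspace generated by a, the reconstruction x̃ := A H S^* x lies in the PGS subspace, satisfies S^* x̃ = S^* x, and is the unique element of minimal Euclidean norm in the set {y ∈ PGS subspace : S^* y = S^* x}. -/
open Matrix BigOperators

noncomputable section

lemma samp_mul_synth (K M : ℕ) (U : Matrix (Fin (M * K)) (Fin (M * K)) ℂ)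
    (hU : U ∈ Matrix.unitaryGroup (Fin (M * K)) ℂ) (s a : Fin (M * K) → ℝ) :
    SamplingMat K M U s * SynthesisMat K M U a
      = Matrix.diagonal (fun i => (Rtil K M s a i : ℂ)) := by
  have h1 : Uᴴ * U = 1 := (Matrix.mem_unitaryGroup_iff').1 hU
  have h2 : SamplingMat K M U s * SynthesisMat K M U a
      = Dmat K M * Matrix.diagonal (fun j => ((s j : ℂ) * (a j : ℂ))) * (Dmat K M)ᵀ := by
    rw [← Matrix.diagonal_mul_diagonal]
    calc _ = Dmat K M * Matrix.diagonal (fun j => (s j : ℂ)) * (Uᴴ * U) *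
          Matrix.diagonal (fun j => (a j : ℂ)) * (Dmat K M)ᵀ := by
            simp only [SamplingMat, SynthesisMat, Matrix.mul_assoc]
      _ = _ := by rw [h1, Matrix.mul_one]; simp only [Matrix.mul_assoc]
  rw [h2]
  ext i k
  rw [Matrix.mul_apply]
  simp only [Matrix.mul_diagonal, Matrix.transpose_apply]
  rw [← finProdFinEquiv.sum_comp, Fintype.sum_prod_type]
  have hD : ∀ (i k : Fin K) (l : Fin M),
      Dmat K M i (finProdFinEquiv (l, k)) = if k = i then 1 else 0 := by
    intro i k l
    simp [Dmat, Nat.mod_eq_of_lt k.isLt, Fin.ext_iff]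
  have hf : ∀ l : Fin M, finProdFinEquiv (l, i) = fold K M i l := fun l => rfl
  simp only [hD]
  by_cases h : i = k
  · subst h
    simp [Rtil, hf]
  · simp [h, Ne.symm h]

lemma synth_conj (K M : ℕ) (U : Matrix (Fin (M * K)) (Fin (M * K)) ℂ)
    (a : Fin (M * K) → ℝ) : (SynthesisMat K M U a)ᴴ = SamplingMat K M U a := by
  have hD : ((Dmat K M)ᵀ)ᴴ = Dmat K M := by
    ext i j
    simp only [Matrix.conjTranspose_apply, Matrix.transpose_apply, Dmat, Matrix.of_apply]
    split_ifs <;> simp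
  have hd : (Matrix.diagonal (fun j => (a j : ℂ)))ᴴ = Matrix.diagonal (fun j => (a j : ℂ)) := by
    rw [Matrix.diagonal_conjTranspose]
    congr 1
    ext j
    simp
  rw [SynthesisMat, SamplingMat, Matrix.conjTranspose_mul, Matrix.conjTranspose_mul, hD, hd,
    Matrix.mul_assoc]

lemma norm_synth (K M : ℕ) (U : Matrix (Fin (M * K)) (Fin (M * K)) ℂ)
    (hU : U ∈ Matrix.unitaryGroup (Fin (M * K)) ℂ) (a : Fin (M * K) → ℝ) (d : Fin K → ℂ) :
    ∑ i, ‖(SynthesisMat K M U a).mulVec d i‖ ^ 2 = ∑ i, Rtil K M a a i * ‖d i‖ ^ 2 := by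
  have key : star ((SynthesisMat K M U a).mulVec d) ⬝ᵥ ((SynthesisMat K M U a).mulVec d)
      = star d ⬝ᵥ ((Matrix.diagonal (fun i => (Rtil K M a a i : ℂ))).mulVec d) := by
    rw [Matrix.star_mulVec, ← Matrix.dotProduct_mulVec, Matrix.mulVec_mulVec, synth_conj,
      samp_mul_synth K M U hU]
  have hz : ∀ z : ℂ, star z * z = ((‖z‖ ^ 2 : ℝ) : ℂ) := by
    intro z
    simpa using Complex.conj_mul' z
  have h : ((∑ i, ‖(SynthesisMat K M U a).mulVec d i‖ ^ 2 : ℝ) : ℂ)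
      = ((∑ i, Rtil K M a a i * ‖d i‖ ^ 2 : ℝ) : ℂ) := by
    rw [Complex.ofReal_sum, Complex.ofReal_sum]
    simp only [dotProduct, Pi.star_apply, hz, Matrix.mulVec_diagonal] at key
    rw [key]
    refine Finset.sum_congr rfl fun i _ => ?_
    rw [Complex.ofReal_mul, ← hz]
    ring
  exact_mod_cast h

/-- Least-squares recovery with a subspace prior (unconstrained, non-direct-sum case):
the reconstruction lies in the PGS subspace, is consistent with the samples, and is the
unique minimal-norm element of the PGS subspace consistent with the samples. -/
theorem subspace_prior_least_squares_recovery (K M : ℕ) (hK : 0 < K) (hM : 0 < M)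
    (U : Matrix (Fin (M * K)) (Fin (M * K)) ℂ)
    (hU : U ∈ Matrix.unitaryGroup (Fin (M * K)) ℂ)
    (s a : Fin (M * K) → ℝ)
    (hRaa : ∀ i : Fin K, Rtil K M a a i ≠ 0)
    (x xt : Fin (M * K) → ℂ)
    (hx : ∃ d : Fin K → ℂ, x = (SynthesisMat K M U a).mulVec d)
    (hxt : xt = (SynthesisMat K M U a).mulVec
      ((Matrix.diagonal (fun i : Fin K =>
          if Rtil K M s a i ≠ 0 then ((Rtil K M s a i : ℂ))⁻¹ else 0)).mulVec
        ((SamplingMat K M U s).mulVec x))) :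
    (∃ d : Fin K → ℂ, xt = (SynthesisMat K M U a).mulVec d)
    ∧ (SamplingMat K M U s).mulVec xt = (SamplingMat K M U s).mulVec x
    ∧ ∀ y : Fin (M * K) → ℂ,
        (∃ d : Fin K → ℂ, y = (SynthesisMat K M U a).mulVec d) →
        (SamplingMat K M U s).mulVec y = (SamplingMat K M U s).mulVec x →
        y ≠ xt → ∑ i, ‖xt i‖ ^ 2 < ∑ i, ‖y i‖ ^ 2 := by
  obtain ⟨d, rfl⟩ := hx
  have hS : ∀ e : Fin K → ℂ, (SamplingMat K M U s).mulVec ((SynthesisMat K M U a).mulVec e)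
      = fun i => (Rtil K M s a i : ℂ) * e i := by
    intro e
    rw [Matrix.mulVec_mulVec, samp_mul_synth K M U hU]
    ext i
    rw [Matrix.mulVec_diagonal]
  obtain ⟨e, he⟩ : ∃ e : Fin K → ℂ, e = fun i => if Rtil K M s a i ≠ 0 then d i else 0 :=
    ⟨_, rfl⟩
  have hxe : xt = (SynthesisMat K M U a).mulVec e := by
    rw [hxt, hS]
    congr 1
    ext i
    rw [Matrix.mulVec_diagonal, he]
    by_cases h : Rtil K M s a i = 0
    · simp [h]
    · have h' : (Rtil K M s a i : ℂ) ≠ 0 := by exact_mod_cast h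
      simp [h]
  clear hxt
  subst hxe
  have hpos : ∀ i, 0 < Rtil K M a a i := fun i =>
    lt_of_le_of_ne (Finset.sum_nonneg fun l _ => mul_self_nonneg _) (hRaa i).symm
  refine ⟨⟨e, rfl⟩, ?_, ?_⟩
  · rw [hS, hS]
    ext i
    by_cases h : Rtil K M s a i = 0 <;> simp [h, he]
  · rintro y ⟨f, rfl⟩ hy hne
    rw [hS, hS] at hy
    rw [norm_synth K M U hU, norm_synth K M U hU]
    have hef : ∀ i, e i = f i ∨ e i = 0 := by
      intro i
      by_cases h : Rtil K M s a i = 0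
      · right; simp [he, h]
      · left
        have h' : (Rtil K M s a i : ℂ) ≠ 0 := by exact_mod_cast h
        have := mul_left_cancel₀ h' (congrFun hy i)
        simp [he, h, this]
    obtain ⟨i, hi⟩ : ∃ i, f i ≠ e i := by
      by_contra! hc
      exact hne (by rw [funext hc])
    refine Finset.sum_lt_sum (fun j _ => ?_) ⟨i, Finset.mem_univ _, ?_⟩
    · refine mul_le_mul_of_nonneg_left ?_ (hpos j).le
      rcases hef j with h | h
      · rw [h]
      · rw [h]; simp
    · refine mul_lt_mul_of_pos_left ?_ (hpos i)
      rcases hef i with h | h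
      · exact absurd h.symm hi
      · rw [h] at hi ⊢
        have := norm_pos_iff.2 hi
        rw [norm_zero, zero_pow two_ne_zero]
        positivity
end
end

section
/- Predefined-reconstruction correction filter under the direct-sum condition: let w : {0,…,N−1} → ℝ be a reconstruction filter response and set W := U diag(w) D^T ∈ ℂ^{N×K}. If R̃_{sa}(i) ≠ 0 and R̃_{ww}(i) ≠ 0 for every i ∈ {0,…,K−1}, then W^*W, W^*A, and S^*A are all diagonal and the correction transform (W^* W)^{−1} W^* A (S^* A)^{−1} equals the K×K diagonal matrix with i-th diagonal entry R̃_{wa}(i)/(R̃_{sa}(i)·R̃_{ww}(i)). -/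
open Matrix BigOperators

noncomputable section

theorem sampling_mul_synthesis (K M : ℕ) (U : Matrix (Fin (M * K)) (Fin (M * K)) ℂ)
    (hU : U ∈ Matrix.unitaryGroup (Fin (M * K)) ℂ) (f g : Fin (M * K) → ℝ) :
    SamplingMat K M U f * SynthesisMat K M U g
      = Matrix.diagonal (fun i : Fin K => ((Rtil K M f g i : ℝ) : ℂ)) := by
  have hUU : Uᴴ * U = 1 := Matrix.mem_unitaryGroup_iff'.mp hU
  have h1 : SamplingMat K M U f * SynthesisMat K M U g
      = Dmat K M * Matrix.diagonal (fun j => (f j : ℂ) * (g j : ℂ)) * (Dmat K M)ᵀ := by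
    unfold SamplingMat SynthesisMat
    calc _ = Dmat K M * Matrix.diagonal (fun j => (f j : ℂ)) * (Uᴴ * U)
          * Matrix.diagonal (fun j => (g j : ℂ)) * (Dmat K M)ᵀ := by
            simp only [Matrix.mul_assoc]
      _ = _ := by
        rw [hUU, Matrix.mul_one, Matrix.mul_assoc (Dmat K M), Matrix.diagonal_mul_diagonal]
  rw [h1]
  ext i k
  rw [Matrix.mul_apply]
  simp only [Matrix.mul_diagonal, Matrix.transpose_apply]
  rw [← (finProdFinEquiv (m := M) (n := K)).sum_comp, Fintype.sum_prod_type]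
  have hD : ∀ (i : Fin K) (l : Fin M) (x : Fin K),
      Dmat K M i (finProdFinEquiv (l, x)) = if x = i then 1 else 0 := by
    intro i l x
    simp [Dmat, Nat.mod_eq_of_lt x.isLt, Fin.ext_iff]
  simp only [hD]
  have hf : ∀ l : Fin M, finProdFinEquiv (l, i) = fold K M i l := fun l => rfl
  by_cases hik : i = k
  · subst hik
    simp [Rtil, hf]
  · simp [hik, Ne.symm hik]

theorem synthesis_conjTranspose (K M : ℕ) (U : Matrix (Fin (M * K)) (Fin (M * K)) ℂ)
    (f : Fin (M * K) → ℝ) : (SynthesisMat K M U f)ᴴ = SamplingMat K M U f := by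
  have hD : (Dmat K M)ᵀᴴ = Dmat K M := by
    ext i j
    simp only [Dmat, Matrix.conjTranspose_apply, Matrix.transpose_apply, Matrix.of_apply]
    split_ifs <;> simp
  have hd : (Matrix.diagonal (fun j => (f j : ℂ)))ᴴ = Matrix.diagonal (fun j => (f j : ℂ)) := by
    rw [Matrix.diagonal_conjTranspose]
    congr 1
    ext j
    simp
  unfold SamplingMat SynthesisMat
  rw [Matrix.conjTranspose_mul, Matrix.conjTranspose_mul, hD, hd, Matrix.mul_assoc]

theorem inv_diagonal_ne (K : ℕ) (r : Fin K → ℝ) (hr : ∀ i, r i ≠ 0) :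
    (Matrix.diagonal (fun i => (r i : ℂ)))⁻¹ = Matrix.diagonal (fun i => ((r i : ℂ))⁻¹) := by
  apply Matrix.inv_eq_right_inv
  rw [Matrix.diagonal_mul_diagonal, ← Matrix.diagonal_one]
  congr 1
  ext i
  exact mul_inv_cancel₀ (by exact_mod_cast hr i)

/-- Predefined-reconstruction correction filter under the direct-sum condition:
`W^*W`, `W^*A` and `S^*A` are diagonal, and the correction transform
`(W^*W)⁻¹ W^*A (S^*A)⁻¹` is diagonal with entries `R̃_{wa}/(R̃_{sa}·R̃_{ww})`. -/
theorem predefined_correction_filter_DS (K M : ℕ) (hK : 0 < K) (hM : 0 < M)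
    (U : Matrix (Fin (M * K)) (Fin (M * K)) ℂ)
    (hU : U ∈ Matrix.unitaryGroup (Fin (M * K)) ℂ)
    (s a w : Fin (M * K) → ℝ)
    (hRsa : ∀ i : Fin K, Rtil K M s a i ≠ 0)
    (hRww : ∀ i : Fin K, Rtil K M w w i ≠ 0) :
    ((SynthesisMat K M U w)ᴴ * SynthesisMat K M U w).IsDiag
    ∧ ((SynthesisMat K M U w)ᴴ * SynthesisMat K M U a).IsDiag
    ∧ (SamplingMat K M U s * SynthesisMat K M U a).IsDiag
    ∧ ((SynthesisMat K M U w)ᴴ * SynthesisMat K M U w)⁻¹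
        * ((SynthesisMat K M U w)ᴴ * SynthesisMat K M U a)
        * (SamplingMat K M U s * SynthesisMat K M U a)⁻¹
      = Matrix.diagonal (fun i : Fin K =>
          ((Rtil K M w a i / (Rtil K M s a i * Rtil K M w w i) : ℝ) : ℂ)) := by
  rw [synthesis_conjTranspose]
  simp only [sampling_mul_synthesis K M U hU]
  refine ⟨Matrix.isDiag_diagonal _, Matrix.isDiag_diagonal _, Matrix.isDiag_diagonal _, ?_⟩
  rw [inv_diagonal_ne K _ hRww, inv_diagonal_ne K _ hRsa, Matrix.diagonal_mul_diagonal,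
    Matrix.diagonal_mul_diagonal]
  congr 1
  ext i
  push_cast
  rw [div_eq_mul_inv, mul_inv]
  ring
end
end

section
/- Spectral form of the smoothness-prior correction filter: let v : {0,…,N−1} → ℝ with v(i) ≠ 0 for all i, set V := U diag(v) U^*, and define w̃ : {0,…,N−1} → ℝ by w̃(i) = s(i)/v(i)². Then with S := U diag(s) D^T (so that S^* = D diag(s) U^* is the sampling matrix), the matrix S^* (V^* V)^{−1} S equals the K×K diagonal matrix with i-th diagonal entry R̃_{s w̃}(i) = Σ_{ℓ=0}^{M−1} s(i+Kℓ)²/v(i+Kℓ)². Consequently, if R̃_{s w̃}(i) ≠ 0 for all i, the correction transform (S^* (V^*V)^{−1} S)^{−1} is diagonal with entries 1/R̃_{s w̃}(i). -/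
open Matrix BigOperators

noncomputable section

theorem D_diag_Dt (K M : ℕ) (d : Fin (M * K) → ℂ) :
    Dmat K M * Matrix.diagonal d * (Dmat K M)ᵀ
      = Matrix.diagonal (fun i : Fin K => ∑ l : Fin M, d (fold K M i l)) := by
  have hf : ∀ (l : Fin M) (b : Fin K), finProdFinEquiv (l, b) = fold K M b l := by
    intro l b
    apply Fin.ext
    simp [fold, finProdFinEquiv]
  have hD : ∀ (i : Fin K) (l : Fin M) (b : Fin K),
      Dmat K M i (fold K M b l) = if b = i then 1 else 0 := by
    intro i l b
    simp [Dmat, fold, Nat.mod_eq_of_lt b.isLt, Fin.ext_iff]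
  ext i k
  rw [Matrix.mul_apply, ← finProdFinEquiv.sum_comp, Fintype.sum_prod_type]
  simp only [Matrix.mul_diagonal, Matrix.transpose_apply, hf, hD, Matrix.diagonal_apply]
  by_cases h : i = k
  · subst h
    simp
  · simp [h, Ne.symm h]

/-- Spectral form of the smoothness-prior correction filter: with `V = U diag(v) U^*`
and `w̃(i) = s(i)/v(i)²`, the matrix `S^* (V^*V)⁻¹ S` is diagonal with entries
`R̃_{s w̃}(i)`; consequently its inverse is diagonal with entries `1/R̃_{s w̃}(i)`. -/
theorem smoothness_correction_spectral_form (K M : ℕ) (hK : 0 < K) (hM : 0 < M)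
    (U : Matrix (Fin (M * K)) (Fin (M * K)) ℂ)
    (hU : U ∈ Matrix.unitaryGroup (Fin (M * K)) ℂ)
    (s v : Fin (M * K) → ℝ) (hv : ∀ i, v i ≠ 0) :
    ((U * Matrix.diagonal (fun j => (s j : ℂ)) * (Dmat K M)ᵀ)ᴴ
        * ((U * Matrix.diagonal (fun j => (v j : ℂ)) * Uᴴ)ᴴ
            * (U * Matrix.diagonal (fun j => (v j : ℂ)) * Uᴴ))⁻¹
        * (U * Matrix.diagonal (fun j => (s j : ℂ)) * (Dmat K M)ᵀ)
      = Matrix.diagonal (fun i : Fin K =>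
          ((Rtil K M s (fun j => s j / (v j) ^ 2) i : ℝ) : ℂ)))
    ∧ ((∀ i : Fin K, Rtil K M s (fun j => s j / (v j) ^ 2) i ≠ 0) →
        ((U * Matrix.diagonal (fun j => (s j : ℂ)) * (Dmat K M)ᵀ)ᴴ
            * ((U * Matrix.diagonal (fun j => (v j : ℂ)) * Uᴴ)ᴴ
                * (U * Matrix.diagonal (fun j => (v j : ℂ)) * Uᴴ))⁻¹
            * (U * Matrix.diagonal (fun j => (s j : ℂ)) * (Dmat K M)ᵀ))⁻¹
          = Matrix.diagonal (fun i : Fin K =>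
              (((Rtil K M s (fun j => s j / (v j) ^ 2) i : ℝ) : ℂ))⁻¹)) := by
  have h1 : Uᴴ * U = 1 := Matrix.mem_unitaryGroup_iff'.mp hU
  have h2 : U * Uᴴ = 1 := Matrix.mem_unitaryGroup_iff.mp hU
  have c1 : ∀ {n : ℕ} (X : Matrix (Fin (M * K)) (Fin n) ℂ), Uᴴ * (U * X) = X := by
    intro n X
    rw [← Matrix.mul_assoc, h1, Matrix.one_mul]
  have hs : ∀ a : Fin (M * K) → ℝ, (Matrix.diagonal (fun j => (a j : ℂ)))ᴴ
      = Matrix.diagonal (fun j => (a j : ℂ)) := by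
    intro a
    rw [Matrix.diagonal_conjTranspose]
    congr 1
    ext j
    simp
  have hDt : ((Dmat K M)ᵀ)ᴴ = Dmat K M := by
    ext i j
    simp only [Matrix.conjTranspose_apply, Matrix.transpose_apply, Dmat, Matrix.of_apply]
    split_ifs <;> simp
  have hinv : ((U * Matrix.diagonal (fun j => (v j : ℂ)) * Uᴴ)ᴴ
            * (U * Matrix.diagonal (fun j => (v j : ℂ)) * Uᴴ))⁻¹
      = U * (Matrix.diagonal (fun j => (((v j : ℂ)) ^ 2)⁻¹) * Uᴴ) := by
    apply Matrix.inv_eq_right_inv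
    simp only [Matrix.conjTranspose_mul, Matrix.conjTranspose_conjTranspose, hs,
      Matrix.mul_assoc, c1]
    rw [← Matrix.mul_assoc (Matrix.diagonal _) (Matrix.diagonal _) Uᴴ,
      Matrix.diagonal_mul_diagonal,
      ← Matrix.mul_assoc (Matrix.diagonal _) (Matrix.diagonal _) Uᴴ,
      Matrix.diagonal_mul_diagonal]
    have : (fun i => (v i : ℂ) * ((v i : ℂ) * ((v i : ℂ) ^ 2)⁻¹)) = fun _ => 1 := by
      funext i
      have : (v i : ℂ) ≠ 0 := by exact_mod_cast hv i
      field_simp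
    rw [this, Matrix.diagonal_one, Matrix.one_mul, h2]
  have key : (U * Matrix.diagonal (fun j => (s j : ℂ)) * (Dmat K M)ᵀ)ᴴ
        * ((U * Matrix.diagonal (fun j => (v j : ℂ)) * Uᴴ)ᴴ
            * (U * Matrix.diagonal (fun j => (v j : ℂ)) * Uᴴ))⁻¹
        * (U * Matrix.diagonal (fun j => (s j : ℂ)) * (Dmat K M)ᵀ)
      = Matrix.diagonal (fun i : Fin K =>
          ((Rtil K M s (fun j => s j / (v j) ^ 2) i : ℝ) : ℂ)) := by
    rw [hinv]
    have := D_diag_Dt K M (fun j => (s j : ℂ) * (((v j : ℂ) ^ 2)⁻¹ * (s j : ℂ)))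
    simp only [← Matrix.diagonal_mul_diagonal, Matrix.mul_assoc] at this
    simp only [Matrix.conjTranspose_mul, hDt, hs, Matrix.mul_assoc, c1]
    rw [this]
    congr 1
    funext i
    simp only [Rtil]
    push_cast
    refine Finset.sum_congr rfl fun l _ => ?_
    ring
  refine ⟨key, fun hR => ?_⟩
  rw [key]
  apply Matrix.inv_eq_right_inv
  rw [Matrix.diagonal_mul_diagonal, ← Matrix.diagonal_one]
  congr 1
  funext i
  exact mul_inv_cancel₀ (by exact_mod_cast hR i)
end
end

section
/- The smoothness prior does not affect the predefined least-squares solution: let W, S ∈ ℂ^{N×K} with S^* W invertible, and let Q ∈ ℂ^{K×K} be any invertible matrix (e.g., Q = W^* V^* V W for an invertible smoothness operator V). Then S^* W Q^{−1} W^* S is invertible and (W Q^{−1} W^* S)(S^* W Q^{−1} W^* S)^{−1} S^* = W (S^* W)^{−1} S^*. In particular, the constrained least-squares reconstruction with smoothness prior coincides with the constrained least-squares reconstruction with subspace prior and is independent of V. -/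
open Matrix BigOperators

noncomputable section

/-- The smoothness prior does not affect the predefined least-squares solution:
for any invertible `Q`, the constrained least-squares reconstruction operator
`(W Q⁻¹ W^* S)(S^* W Q⁻¹ W^* S)⁻¹ S^*` equals `W (S^* W)⁻¹ S^*`. -/
theorem predefined_ls_independent_of_smoothness (N K : ℕ)
    (W S : Matrix (Fin N) (Fin K) ℂ)
    (hSW : IsUnit (Sᴴ * W))
    (Q : Matrix (Fin K) (Fin K) ℂ) (hQ : IsUnit Q) :
    IsUnit (Sᴴ * W * Q⁻¹ * Wᴴ * S)
    ∧ (W * Q⁻¹ * Wᴴ * S) * (Sᴴ * W * Q⁻¹ * Wᴴ * S)⁻¹ * Sᴴ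
        = W * (Sᴴ * W)⁻¹ * Sᴴ := by
  have hWS : IsUnit (Wᴴ * S) := by
    have h : (Sᴴ * W)ᴴ = Wᴴ * S := by
      rw [Matrix.conjTranspose_mul, Matrix.conjTranspose_conjTranspose]
    rw [← h]
    exact hSW.star
  have hQi : IsUnit Q⁻¹ := Matrix.isUnit_nonsing_inv_iff.mpr hQ
  have hB : IsUnit (Q⁻¹ * (Wᴴ * S)) := hQi.mul hWS
  have e : Sᴴ * W * Q⁻¹ * Wᴴ * S = (Sᴴ * W) * (Q⁻¹ * (Wᴴ * S)) := by
    simp only [Matrix.mul_assoc]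
  have e2 : W * Q⁻¹ * Wᴴ * S = W * (Q⁻¹ * (Wᴴ * S)) := by
    simp only [Matrix.mul_assoc]
  rw [e, e2]
  refine ⟨hSW.mul hB, ?_⟩
  generalize Q⁻¹ * (Wᴴ * S) = B at hB
  have hBd : IsUnit B.det := (Matrix.isUnit_iff_isUnit_det B).mp hB
  rw [Matrix.mul_inv_rev, Matrix.mul_assoc W B, ← Matrix.mul_assoc B,
    Matrix.mul_nonsing_inv B hBd, Matrix.one_mul]
end
end
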